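/- Let n ≥ 2 and let X_1, …, X_n be weakly negatively associated and identically distributed super-Pareto random variables, let X be a random variable with the same distribution as X_1, and let (θ_1, …, θ_n) ∈ Δ_n with θ_i > 0 for at least two indices i. Then X <_st θ_1 X_1 + ⋯ + θ_n X_n, i.e., P(X > x) < P(θ_1 X_1 + ⋯ + θ_n X_n > x) for every x ∈ ℝ with 0 < P(X > x) < 1. -/

import Mathlib

/-!
Only three features of the laws are needed: the marginals are bounded below by `m = f 1`, their
distribution functions are controlled by convexity of `f`, and lower orthants of a weakly
negatively associated family have probability at most the product of the marginal probabilities.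

Fix `x` and write `P(X ≤ x) = 1 - 1/t` with `t > 1`, where `t` is the largest point with
`f t ≤ x`.  Since each `X j ≥ m` almost surely, `∑ θ j X j ≤ x` forces
`X i ≤ m + (x - m) / θ i` whenever `θ i > 0`.  Convexity of `f` between `1` and `y` shows that
`f y ≤ m + (x - m) / θ` implies `1 + θ (y - 1) ≤ t`, hence
`P(X ≤ m + (x - m) / θ) ≤ (t - 1) / (t - 1 + θ)`.  Therefore
`P(∑ θ i X i ≤ x) ≤ ∏ (t - 1) / (t - 1 + θ i) = 1 / ∏ (1 + θ i / (t - 1))`, and the last product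
is strictly larger than `1 + ∑ θ i / (t - 1) = t / (t - 1)` because two weights are positive.
-/

open MeasureTheory ProbabilityTheory Set

noncomputable section

/-- `Y` follows the Pareto(1) distribution under `P`. -/
def IsPareto1 {Ω : Type} [MeasurableSpace Ω] (P : Measure Ω) (Y : Ω → ℝ) : Prop :=
  Measurable Y ∧ ∀ x : ℝ, (P {ω | Y ω ≤ x}).toReal = if 1 ≤ x then 1 - 1 / x else 0

/-- `X` is super-Pareto: equal in distribution to `f ∘ Y` for some increasing, convex,
non-constant `f` and `Y ~ Pareto(1)`. -/
def IsSuperPareto {Ω : Type} [MeasurableSpace Ω] (P : Measure Ω) (X : Ω → ℝ) : Prop :=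
  Measurable X ∧
    ∃ (Ω' : Type) (_ : MeasurableSpace Ω') (Q : Measure Ω') (Y : Ω' → ℝ) (f : ℝ → ℝ),
      IsProbabilityMeasure Q ∧ IsPareto1 Q Y ∧ Monotone f ∧ ConvexOn ℝ Set.univ f ∧
      (∃ u v : ℝ, f u ≠ f v) ∧ Measure.map X P = Measure.map (f ∘ Y) Q

/-- A decreasing set in `ι → ℝ`. -/
def DecreasingSet {ι : Type} (S : Set (ι → ℝ)) : Prop :=
  ∀ x ∈ S, ∀ y : ι → ℝ, (∀ i, y i ≤ x i) → y ∈ S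

/-- Weak negative association of the family `X`. -/
def WeaklyNegAssoc {Ω : Type} [MeasurableSpace Ω] {ι : Type} (P : Measure Ω)
    (X : ι → Ω → ℝ) : Prop :=
  ∀ (i : ι) (S : Set ({j : ι // j ≠ i} → ℝ)), MeasurableSet S → DecreasingSet S →
    ∀ x : ℝ,
      P ({ω | (fun j : {j : ι // j ≠ i} => X j.1 ω) ∈ S} ∩ {ω | X i ω ≤ x}) ≤
        P {ω | (fun j : {j : ι // j ≠ i} => X j.1 ω) ∈ S} * P {ω | X i ω ≤ x}

/-- First-order stochastic dominance `X ≤_st Y`: `P(X ≤ x) ≥ P(Y ≤ x)` for all `x`. -/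
def StochDom {Ω : Type} [MeasurableSpace Ω] (P : Measure Ω) (X Y : Ω → ℝ) : Prop :=
  ∀ x : ℝ, P {ω | Y ω ≤ x} ≤ P {ω | X ω ≤ x}

/-- Essential infimum of a random variable. -/
def essInfRV {Ω : Type} [MeasurableSpace Ω] (P : Measure Ω) (X : Ω → ℝ) : ℝ :=
  sInf {z : ℝ | 0 < P {ω | X ω ≤ z}}

/-- Value-at-Risk at level `p`. -/
def VaR {Ω : Type} [MeasurableSpace Ω] (P : Measure Ω) (X : Ω → ℝ) (p : ℝ) : ℝ :=
  sInf {t : ℝ | p ≤ (P {ω | X ω ≤ t}).toReal}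

/-- Membership in the standard simplex `Δ_n`. -/
def MemSimplex {n : ℕ} (θ : Fin n → ℝ) : Prop :=
  (∀ i, θ i ∈ Set.Icc (0 : ℝ) 1) ∧ ∑ i, θ i = 1

/-- The probability space is atomless. -/
def AtomlessProb {Ω : Type} [MeasurableSpace Ω] (P : Measure Ω) : Prop :=
  ∀ s : Set Ω, MeasurableSet s → 0 < P s →
    ∃ t : Set Ω, MeasurableSet t ∧ t ⊆ s ∧ 0 < P t ∧ P t < P s

/-- A law-invariant set of random variables. -/
def LawInvariantSet {Ω : Type} [MeasurableSpace Ω] (P : Measure Ω)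
    (D : Set (Ω → ℝ)) : Prop :=
  ∀ U ∈ D, ∀ V : Ω → ℝ, Measure.map U P = Measure.map V P → V ∈ D

/-- The distortion risk measure associated with distortion function `h`. -/
def distortionRM {Ω : Type} [MeasurableSpace Ω] (P : Measure Ω) (h : ℝ → ℝ)
    (Y : Ω → ℝ) : ℝ :=
  (∫ x in Set.Iic (0 : ℝ), (h ((P {ω | x < Y ω}).toReal) - 1)) +
    ∫ x in Set.Ioi (0 : ℝ), h ((P {ω | x < Y ω}).toReal)

/-- Right derivative (as the infimum of slopes; for convex functions this is the
one-sided derivative). -/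
def rightDerivAt (c : ℝ → ℝ) (x : ℝ) : ℝ :=
  sInf ((fun d => (c (x + d) - c x) / d) '' Set.Ioi (0 : ℝ))

/-- Left derivative (as the supremum of slopes; for convex functions this is the
one-sided derivative). -/
def leftDerivAt (c : ℝ → ℝ) (x : ℝ) : ℝ :=
  sSup ((fun d => (c (x - d) - c x) / (-d)) '' Set.Ioi (0 : ℝ))

/-- Expected Shortfall at level `q`. -/
def ES {Ω : Type} [MeasurableSpace Ω] (P : Measure Ω) (X : Ω → ℝ) (q : ℝ) : ℝ :=
  (1 / (1 - q)) * ∫ u in Set.Ioo q 1, VaR P X u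


/-- Lower orthants of a weakly negatively associated family are at most as likely as under
independence. -/
lemma wna_orthant {Ω : Type} [MeasurableSpace Ω] {P : Measure Ω} [IsProbabilityMeasure P]
    {ι : Type} [DecidableEq ι] {X : ι → Ω → ℝ} (hWNA : WeaklyNegAssoc P X)
    (s : ι → ℝ) (T : Finset ι) :
    P {ω | ∀ i ∈ T, X i ω ≤ s i} ≤ ∏ i ∈ T, P {ω | X i ω ≤ s i} := by
  induction T using Finset.induction_on with
  | empty => simp
  | insert a T ha ih =>
    rw [Finset.prod_insert ha]
    let S : Set ({j : ι // j ≠ a} → ℝ) := {v | ∀ j ∈ T, ∀ h : j ≠ a, v ⟨j, h⟩ ≤ s j}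
    have hSm : MeasurableSet S := by
      have hS : S = ⋂ j ∈ T, ⋂ h : j ≠ a, {v | v ⟨j, h⟩ ≤ s j} := by
        ext v; simp [S]
      rw [hS]
      refine Finset.measurableSet_biInter T fun j _ => MeasurableSet.iInter fun h => ?_
      exact measurableSet_le (measurable_pi_apply _) measurable_const
    have hSd : DecreasingSet S := fun v hv w hw j hj h => (hw _).trans (hv j hj h)
    have hne : ∀ j ∈ T, j ≠ a := fun j hj h => ha (h ▸ hj)
    have hpre : {ω | (fun j : {j : ι // j ≠ a} => X j.1 ω) ∈ S} = {ω | ∀ i ∈ T, X i ω ≤ s i} := by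
      ext ω
      exact ⟨fun h j hj => h j hj (hne j hj), fun h j hj _ => h j hj⟩
    have h1 := hWNA a S hSm hSd (s a)
    rw [hpre] at h1
    calc P {ω | ∀ i ∈ insert a T, X i ω ≤ s i}
        ≤ P ({ω | ∀ i ∈ T, X i ω ≤ s i} ∩ {ω | X a ω ≤ s a}) := by
          refine measure_mono fun ω hω => ⟨fun i hi => hω i (Finset.mem_insert_of_mem hi), ?_⟩
          exact hω a (Finset.mem_insert_self a T)
      _ ≤ _ := h1
      _ ≤ _ := by
          rw [mul_comm]
          gcongr

/-- The part of the super-Pareto property that the proof uses, expressed through the law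
`μ`: a lower bound `m` of the support and the convexity estimate on the distribution function. -/
lemma superPareto_law {Ω' : Type} [MeasurableSpace Ω'] {Q : Measure Ω'} [IsProbabilityMeasure Q]
    {Y : Ω' → ℝ} {f : ℝ → ℝ} (hY : IsPareto1 Q Y) (hf : Monotone f)
    (hc : ConvexOn ℝ Set.univ f) {μ : Measure ℝ} (hμ : μ = Measure.map (f ∘ Y) Q) :
    μ (Iio (f 1)) = 0 ∧ ∀ x : ℝ, μ (Iic x) ≠ 0 → μ (Iic x) ≠ 1 →
      ∃ t : ℝ, 1 < t ∧ f 1 ≤ x ∧ μ.real (Iic x) = 1 - 1 / t ∧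
        ∀ θ : ℝ, 0 < θ → θ ≤ 1 →
          μ.real (Iic (f 1 + (x - f 1) / θ)) ≤ (t - 1) / (t - 1 + θ) := by
  obtain ⟨hYm, hYd⟩ := hY
  have hfY : Measurable (f ∘ Y) := hf.measurable.comp hYm
  have hmap : ∀ s, μ (Iic s) = Q {ω | f (Y ω) ≤ s} := by
    intro s; rw [hμ, Measure.map_apply hfY measurableSet_Iic]; rfl
  have hY1 : Q {ω | Y ω ≤ 1} = 0 := by
    have := hYd 1
    simpa [ENNReal.toReal_eq_zero_iff] using this
  have hlow : μ (Iio (f 1)) = 0 := by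
    rw [hμ, Measure.map_apply hfY measurableSet_Iio]
    refine measure_mono_null (fun ω hω => ?_) hY1
    exact (hf.reflect_lt hω).le
  have hcont : Continuous f :=
    continuousOn_univ.1 (hc.continuousOn isOpen_univ)
  refine ⟨hlow, fun x h0 h1 => ?_⟩
  have hmx : f 1 ≤ x := by
    by_contra! h
    exact h0 (measure_mono_null (fun y hy => lt_of_le_of_lt hy h) hlow)
  -- `μ (Iic x) ≠ 1` provides a point above level `x`, which bounds the sublevel set.
  obtain ⟨b, hb⟩ : ∃ b, x < f b := by
    by_contra! h
    apply h1
    rw [hmap]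
    simp [h]
  have hbdd : BddAbove {y | f y ≤ x} :=
    ⟨b, fun y hy => (hf.reflect_lt (lt_of_le_of_lt hy hb)).le⟩
  set t := sSup {y | f y ≤ x} with ht
  have ht1 : 1 ≤ t := le_csSup hbdd hmx
  have htx : f t ≤ x :=
    (isClosed_le hcont continuous_const).csSup_mem ⟨1, hmx⟩ hbdd
  have hiff : ∀ y, f y ≤ x ↔ y ≤ t := fun y => ⟨fun h => le_csSup hbdd h, fun h => (hf h).trans htx⟩
  have hreal : μ.real (Iic x) = 1 - 1 / t := by
    rw [Measure.real, hmap]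
    simp_rw [hiff]
    rw [hYd, if_pos ht1]
  have htlt : 1 < t := by
    refine lt_of_le_of_ne ht1 fun h => h0 ?_
    rw [hmap]
    simp_rw [hiff]
    rw [← h, hY1]
  refine ⟨t, htlt, hmx, hreal, fun θ hθ hθ1 => ?_⟩
  have hw : 1 ≤ 1 + (t - 1) / θ := by
    have := div_nonneg (sub_nonneg.2 ht1) hθ.le
    linarith
  have hsub : Q {ω | f (Y ω) ≤ f 1 + (x - f 1) / θ} ≤ Q {ω | Y ω ≤ 1 + (t - 1) / θ} := by
    refine measure_mono fun ω hω => ?_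
    simp only [mem_ofPred_eq] at hω ⊢
    set y := Y ω
    have h2 := hc.2 (mem_univ y) (mem_univ 1) hθ.le (sub_nonneg.2 hθ1) (by ring)
    simp only [smul_eq_mul] at h2
    have h3 : θ * f y ≤ θ * (f 1 + (x - f 1) / θ) := by gcongr
    have h4 : θ * (f 1 + (x - f 1) / θ) = θ * f 1 + (x - f 1) := by field_simp
    have h5 := (hiff _).1 (h2.trans (by linarith : θ * f y + (1 - θ) * f 1 ≤ x))
    have h6 : y - 1 ≤ (t - 1) / θ := by rw [le_div_iff₀ hθ]; linarith
    linarith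
  calc μ.real (Iic (f 1 + (x - f 1) / θ))
      = (Q {ω | f (Y ω) ≤ f 1 + (x - f 1) / θ}).toReal := by rw [Measure.real, hmap]
    _ ≤ (Q {ω | Y ω ≤ 1 + (t - 1) / θ}).toReal :=
        ENNReal.toReal_mono (measure_ne_top _ _) hsub
    _ = 1 - 1 / (1 + (t - 1) / θ) := by rw [hYd, if_pos hw]
    _ = (t - 1) / (t - 1 + θ) := by
        have h : t - 1 + θ ≠ 0 := by linarith
        have h' : 1 + (t - 1) / θ = (t - 1 + θ) / θ := by field_simp; ring
        rw [h', one_div_div, eq_div_iff h, sub_mul, div_mul_cancel₀ _ h]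
        ring

lemma one_add_sum_le_prod {ι : Type} [DecidableEq ι] (T : Finset ι) (a : ι → ℝ)
    (ha : ∀ i ∈ T, 0 ≤ a i) : 1 + ∑ i ∈ T, a i ≤ ∏ i ∈ T, (1 + a i) := by
  induction T using Finset.induction_on with
  | empty => simp
  | insert b T hb ih =>
    rw [Finset.prod_insert hb, Finset.sum_insert hb]
    have h1 := ih fun i hi => ha i (Finset.mem_insert_of_mem hi)
    have h2 := ha b (Finset.mem_insert_self b T)
    have h3 : 0 ≤ ∑ i ∈ T, a i := Finset.sum_nonneg fun i hi => ha i (Finset.mem_insert_of_mem hi)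
    nlinarith [mul_nonneg h2 h3, mul_le_mul_of_nonneg_left h1 (by linarith : 0 ≤ 1 + a b)]

lemma one_add_sum_lt_prod {ι : Type} [DecidableEq ι] (T : Finset ι) (a : ι → ℝ)
    (ha : ∀ i ∈ T, 0 < a i) {j k : ι} (hj : j ∈ T) (hk : k ∈ T) (hjk : j ≠ k) :
    1 + ∑ i ∈ T, a i < ∏ i ∈ T, (1 + a i) := by
  rw [← Finset.mul_prod_erase T _ hj, ← Finset.add_sum_erase T _ hj]
  have hpos : ∀ i ∈ T.erase j, 0 < a i := fun i hi => ha i (Finset.mem_of_mem_erase hi)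
  have h1 := one_add_sum_le_prod (T.erase j) a fun i hi => (hpos i hi).le
  have h2 := ha j hj
  have h3 : 0 < ∑ i ∈ T.erase j, a i :=
    Finset.sum_pos hpos ⟨k, Finset.mem_erase.2 ⟨hjk.symm, hk⟩⟩
  nlinarith [mul_pos h2 h3, mul_le_mul_of_nonneg_left h1 (by linarith : 0 ≤ 1 + a j)]

/-- strict stochastic dominance when at least two weights are positive. -/
theorem stmt_1 {Ω : Type} [MeasurableSpace Ω] (P : Measure Ω) [IsProbabilityMeasure P]
    (n : ℕ) (hn : 2 ≤ n) (X : Fin n → Ω → ℝ) (X0 : Ω → ℝ) (hX0 : Measurable X0)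
    (hSP : ∀ i, IsSuperPareto P (X i))
    (hWNA : WeaklyNegAssoc P X)
    (hid : ∀ i j, Measure.map (X i) P = Measure.map (X j) P)
    (hX0d : Measure.map X0 P = Measure.map (X ⟨0, by omega⟩) P)
    (θ : Fin n → ℝ) (hθ : MemSimplex θ)
    (htwo : ∃ i j, i ≠ j ∧ 0 < θ i ∧ 0 < θ j) :
    ∀ x : ℝ, 0 < P {ω | x < X0 ω} → P {ω | x < X0 ω} < 1 →
      P {ω | x < X0 ω} < P {ω | x < ∑ i, θ i * X i ω} := by
  intro x hx0 hx1
  have hXm : ∀ i, Measurable (X i) := fun i => (hSP i).1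
  let i0 : Fin n := ⟨0, by omega⟩
  obtain ⟨-, Ω', _, Q, Y, f, hQ, hY, hf, hc, -, hlaw⟩ := hSP i0
  set μ := Measure.map (X i0) P with hμ
  obtain ⟨hlow, hmain⟩ := superPareto_law hY hf hc hlaw
  have hmapX : ∀ i s, P {ω | X i ω ≤ s} = μ (Iic s) := fun i s => by
    rw [hμ, hid i0 i, Measure.map_apply (hXm i) measurableSet_Iic]; rfl
  have hmap0 : P {ω | X0 ω ≤ x} = μ (Iic x) := by
    rw [← hX0d, Measure.map_apply hX0 measurableSet_Iic]; rfl
  have hSm : Measurable fun ω => ∑ i, θ i * X i ω :=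
    Finset.measurable_sum _ fun i _ => (hXm i).const_mul _
  have hcompl : ∀ Z : Ω → ℝ, Measurable Z → P {ω | x < Z ω} = 1 - P {ω | Z ω ≤ x} := by
    intro Z hZ
    rw [← prob_compl_eq_one_sub (measurableSet_le hZ measurable_const)]
    congr 1; ext ω; simp
  rw [hcompl _ hX0, hcompl _ hSm, hmap0]
  rw [hcompl _ hX0, hmap0] at hx0 hx1
  obtain ⟨t, ht, hmx, hreal, hbound⟩ := hmain x
    (fun h => by simp [h] at hx1) (fun h => by simp [h] at hx0)
  set m := f 1
  have hae : ∀ᵐ ω ∂P, ∀ i, m ≤ X i ω := by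
    refine ae_all_iff.2 fun i => ?_
    have h : P (X i ⁻¹' Iio m) = 0 := by
      rw [← Measure.map_apply (hXm i) measurableSet_Iio, ← hid i0 i]; exact hlow
    filter_upwards [measure_eq_zero_iff_ae_notMem.1 h] with ω hω
    simpa using hω
  obtain ⟨hθ0, hθs⟩ := hθ
  obtain ⟨j, k, hjk, hj, hk⟩ := htwo
  let T : Finset (Fin n) := Finset.univ.filter fun i => 0 < θ i
  have hT : ∀ i ∈ T, 0 < θ i := fun i hi => (Finset.mem_filter.1 hi).2
  have hTsum : ∑ i ∈ T, θ i = 1 := by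
    rw [← hθs]
    refine Finset.sum_subset (Finset.subset_univ _) fun i _ hi => ?_
    have h : ¬ 0 < θ i := fun h => hi (by simp [T, h])
    exact le_antisymm (not_lt.1 h) (hθ0 i).1
  -- Since `X l ≥ m` for the other indices, a small weighted sum forces every `X i` to be small.
  have hstep : P {ω | ∑ i, θ i * X i ω ≤ x} ≤
      P {ω | ∀ i ∈ T, X i ω ≤ m + (x - m) / θ i} := by
    refine measure_mono_ae ?_
    filter_upwards [hae] with ω hω hS i hi
    have hSx : ∑ i, θ i * X i ω ≤ x := hS
    have h1 : ∑ l, θ l * (X l ω - m) ≤ x - m := by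
      simp only [mul_sub, Finset.sum_sub_distrib, ← Finset.sum_mul, hθs]
      linarith
    have h2 : θ i * (X i ω - m) ≤ ∑ l, θ l * (X l ω - m) :=
      Finset.single_le_sum (f := fun l => θ l * (X l ω - m))
        (fun l _ => mul_nonneg (hθ0 l).1 (sub_nonneg.2 (hω l))) (Finset.mem_univ i)
    have h3 : X i ω - m ≤ (x - m) / θ i := by
      rw [le_div_iff₀ (hT i hi)]; linarith
    show X i ω ≤ m + (x - m) / θ i
    linarith
  have horth := hstep.trans (wna_orthant hWNA (fun i => m + (x - m) / θ i) T)
  simp only [hmapX] at horth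
  have : IsProbabilityMeasure μ := Measure.isProbabilityMeasure_map (hXm i0).aemeasurable
  have ht0 : 0 < t - 1 := by linarith
  have hlt : (P {ω | ∑ i, θ i * X i ω ≤ x}).toReal < μ.real (Iic x) := by
    calc (P {ω | ∑ i, θ i * X i ω ≤ x}).toReal
        ≤ (∏ i ∈ T, μ (Iic (m + (x - m) / θ i))).toReal :=
          ENNReal.toReal_mono (ENNReal.prod_ne_top fun i _ => measure_ne_top _ _) horth
      _ = ∏ i ∈ T, μ.real (Iic (m + (x - m) / θ i)) := by
          rw [ENNReal.toReal_prod]; rfl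
      _ ≤ ∏ i ∈ T, (1 + θ i / (t - 1))⁻¹ := by
          refine Finset.prod_le_prod (fun i _ => measureReal_nonneg) fun i hi => ?_
          refine (hbound (θ i) (hT i hi) (hθ0 i).2).trans_eq ?_
          have := hT i hi
          have : t - 1 + θ i ≠ 0 := by linarith
          field_simp
      _ = (∏ i ∈ T, (1 + θ i / (t - 1)))⁻¹ := Finset.prod_inv_distrib _
      _ < (1 + ∑ i ∈ T, θ i / (t - 1))⁻¹ := by
          refine inv_strictAnti₀ ?_ (one_add_sum_lt_prod T _ (fun i hi => div_pos (hT i hi) ht0)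
            (j := j) (k := k) (by simp [T, hj]) (by simp [T, hk]) hjk)
          have := Finset.sum_nonneg fun i (hi : i ∈ T) => (div_pos (hT i hi) ht0).le
          linarith
      _ = μ.real (Iic x) := by
          rw [hreal, ← Finset.sum_div, hTsum]
          have : t ≠ 0 := by linarith
          have : t - 1 ≠ 0 := ht0.ne'
          field_simp
          ring
  have hlt' : P {ω | ∑ i, θ i * X i ω ≤ x} < μ (Iic x) :=
    (ENNReal.toReal_lt_toReal (measure_ne_top _ _) (measure_ne_top _ _)).1 hlt
  refine lt_of_le_of_ne (tsub_le_tsub_left hlt'.le 1) fun h => hlt'.ne' ?_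
  exact (ENNReal.sub_right_inj ENNReal.one_ne_top prob_le_one prob_le_one).1 h

end
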